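/- Let G be a word hyperbolic group generated by a finite set 𝒢 closed under inversion, and let C₁ and C₂ be virtually cyclic subgroups of G whose intersection C₁ ∩ C₂ is finite. Then there is a constant K₂ > 0 such that for any c₁ ∈ C₁ there exists c₂ ∈ C₂ with l_𝒢(c₂) ≤ K₂ such that the element c₁c₂ is shortest (with respect to l_𝒢) in the coset c₁C₂. -/

import Mathlib

universe u v w

section Defs

variable {G : Type u} [Group G]

/-- A finite generating set closed under inversion. -/
def IsSymmGen (X : Set G) : Prop :=
  X.Finite ∧ (∀ x ∈ X, x⁻¹ ∈ X) ∧ Subgroup.closure X = ⊤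

/-- Word length of `g` with respect to `X`. -/
noncomputable def wordLength (X : Set G) (g : G) : ℕ :=
  sInf {n : ℕ | ∃ l : List G, l.length = n ∧ (∀ x ∈ l, x ∈ X) ∧ l.prod = g}

/-- Word metric. -/
noncomputable def wordDist (X : Set G) (g h : G) : ℕ :=
  wordLength X (g⁻¹ * h)

/-- Gromov product with respect to the word metric. -/
noncomputable def gromovProd (X : Set G) (x y w : G) : ℝ :=
  ((wordDist X x w : ℝ) + (wordDist X y w : ℝ) - (wordDist X x y : ℝ)) / 2

end Defs

/-- A group is word hyperbolic if for some finite symmetric generating set the Gromov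
product satisfies the hyperbolicity inequality. -/
def IsWordHyperbolic (G : Type u) [Group G] : Prop :=
  ∃ X : Set G, IsSymmGen X ∧ ∃ δ : ℝ, 0 ≤ δ ∧
    ∀ x y z w : G,
      gromovProd X x z w ≥ min (gromovProd X x y w) (gromovProd X y z w) - δ

/-- A subgroup is quasiconvex: it is finitely generated and word lengths distort linearly. -/
def IsQuasiconvex {G : Type u} [Group G] (A : Subgroup G) : Prop :=
  ∃ Y : Set ↥A, IsSymmGen Y ∧ ∃ X : Set G, IsSymmGen X ∧ ∃ c : ℝ, 0 < c ∧
    ∀ a : ↥A, (wordLength Y a : ℝ) ≤ c * (wordLength X (a : G) : ℝ) + c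

/-- Property (Q): every finitely generated subgroup is quasiconvex. -/
def HasPropertyQ (G : Type u) [Group G] : Prop :=
  ∀ H : Subgroup G, H.FG → IsQuasiconvex H

/-- A group is virtually cyclic if it has a cyclic subgroup of finite index. -/
def IsVirtuallyCyclic (C : Type u) [Group C] : Prop :=
  ∃ Z : Subgroup C, IsCyclic ↥Z ∧ Z.FiniteIndex

/-- `G` is the amalgamated free product of its subgroups `A` and `B` along `C`:
`C = A ⊓ B`, `A ⊔ B = ⊤` and `G` has the pushout universal property. -/
structure IsAmalgamatedFreeProduct {G : Type u} [Group G] (A B C : Subgroup G) : Prop where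
  le_left : C ≤ A
  le_right : C ≤ B
  inf_eq : A ⊓ B = C
  sup_eq_top : A ⊔ B = ⊤
  univ : ∀ (K : Type u) [Group K] (f : ↥A →* K) (g : ↥B →* K),
    (∀ (c : G) (hA : c ∈ A) (hB : c ∈ B), f ⟨c, hA⟩ = g ⟨c, hB⟩) →
    ∃ h : G →* K, (∀ a : ↥A, h a = f a) ∧ (∀ b : ↥B, h b = g b)

section Words

variable {G : Type u} [Group G]

/-- A word over the alphabet `X`. -/
def IsWordOver (X : Set G) (l : List G) : Prop := ∀ x ∈ l, x ∈ X

/-- A geodesic word over `X`. -/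
def IsGeodesicWord (X : Set G) (l : List G) : Prop :=
  IsWordOver X l ∧ l.length = wordLength X l.prod

/-- A `lam`-quasigeodesic word over `X`: every subword `v` satisfies
`l(v) ≤ lam * l_X(v̄) + lam`. -/
def IsQuasigeodesicWord (X : Set G) (lam : ℝ) (l : List G) : Prop :=
  IsWordOver X l ∧
    ∀ v : List G, v <:+: l → (v.length : ℝ) ≤ lam * (wordLength X v.prod : ℝ) + lam

/-- `g` is a shortest element of the subset `S` with respect to `wordLength X`. -/
def ShortestIn (X : Set G) (g : G) (S : Set G) : Prop :=
  g ∈ S ∧ ∀ s ∈ S, wordLength X g ≤ wordLength X s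

end Words

/-- `G` together with `ια, ιβ` is the pushout of `ℤ → A, 1 ↦ x` and `ℤ → B, 1 ↦ y`. -/
structure IsAmalgamOverZ {A : Type u} {B : Type v} {G : Type w}
    [Group A] [Group B] [Group G]
    (ια : A →* G) (ιβ : B →* G) (x : A) (y : B) : Prop where
  comm : ια x = ιβ y
  gen : ια.range ⊔ ιβ.range = ⊤
  univ : ∀ (K : Type (max u v w)) [Group K] (f : A →* K) (g : B →* K),
    f x = g y → ∃ h : G →* K, h.comp ια = f ∧ h.comp ιβ = g

/-! Let `c₁c₂` be shortest in `c₁C₂`. Twice the Gromov product of `c₁⁻¹` and `c₂` at `1` is `l(c₁)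
+ l(c₂) - l(c₁c₂)`, which is at least `l(c₂)`, so it suffices to bound the Gromov products at `1`
of elements `p ∈ C₁` and `q ∈ C₂`.

If `(p·q)_1` is large, then geodesics from `1` to `p` and from `1` to `q` fellow-travel for a long
time. The subgroups being quasiconvex, this gives `a ∈ C₁` far from `1` and at bounded distance
from some `b ∈ C₂`. But the elements of `C₁` within bounded distance of `C₂` lie in finitely many
cosets of the finite group `C₁ ∩ C₂`.

A virtually cyclic subgroup is quasiconvex because the powers of an element `g` of infinite order
form a quasigeodesic. To see this it is enough to find a power `h = g ^ i` and a point `x` which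
`h ^ 2` moves much farther than `h` does; otherwise too many powers of `g` would move the
middle of a long geodesic from `1` to `g ^ k` by a bounded amount. The stability of quasigeodesics
then also makes the bound independent of the finite generating set. -/

open Filter Metric

section Hyperbolic

variable {α : Type*} [PseudoMetricSpace α] {δ : ℝ}

/-- The Gromov product of `x` and `y` based at `w` in a pseudometric space. It vanishes exactly
when `w` lies on a geodesic from `x` to `y`, and this is how betweenness is expressed below. -/
noncomputable def gromovProduct (x y w : α) : ℝ := (dist x w + dist y w - dist x y) / 2

/-- Gromov's `δ`-hyperbolicity of a pseudometric space. -/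
def GromovHyperbolic (α : Type*) [PseudoMetricSpace α] (δ : ℝ) : Prop :=
  ∀ x y z w : α,
    min (gromovProduct x y w) (gromovProduct y z w) - δ ≤ gromovProduct x z w

/-- A space in which every natural number `t ≤ dist x y` is realised as the distance from `x` to a
point between `x` and `y`: the analogue of a geodesic space for integer-valued metrics. -/
def IsDiscretelyGeodesic (α : Type*) [PseudoMetricSpace α] : Prop :=
  ∀ (x y : α) (t : ℕ), (t : ℝ) ≤ dist x y → ∃ u, dist x u = t ∧ dist u y = dist x y - t

/-- The points `f 0, …, f n` form a discrete quasigeodesic with multiplicative and additive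
constant `lam`. -/
structure IsQuasigeodesicChain (lam : ℝ) (n : ℕ) (f : ℕ → α) : Prop where
  dist_succ_le : ∀ i < n, dist (f i) (f (i + 1)) ≤ lam
  sub_le : ∀ i j : ℕ, i ≤ j → j ≤ n → (j : ℝ) - i ≤ lam * dist (f i) (f j) + lam

/-- Every geodesic between points of `A` stays in the `R`-neighbourhood of `A`. -/
def IsQuasiconvexSet (R : ℝ) (A : Set α) : Prop :=
  ∀ x ∈ A, ∀ y ∈ A, ∀ w, gromovProduct x y w = 0 → ∃ a ∈ A, dist a w ≤ R

theorem gromovProduct_comm (x y w : α) : gromovProduct x y w = gromovProduct y x w := by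
  simp only [gromovProduct, dist_comm x y, add_comm]

theorem gromovProduct_le_dist_left (x y w : α) : gromovProduct x y w ≤ dist x w := by
  simp only [gromovProduct]
  linarith [dist_triangle_left y w x]

theorem gromovProduct_nonneg (x y w : α) : 0 ≤ gromovProduct x y w := by
  simp only [gromovProduct]
  linarith [dist_triangle_right x y w]

theorem GromovHyperbolic.nonneg (h : GromovHyperbolic α δ) (x : α) : 0 ≤ δ := by
  have := h x x x x
  rw [min_self] at this
  linarith

theorem GromovHyperbolic.four_point (h : GromovHyperbolic α δ) (x y z w : α) :
    dist x z + dist y w ≤ dist x y + dist z w + 2 * δ ∨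
      dist x z + dist y w ≤ dist y z + dist x w + 2 * δ := by
  have := sub_le_iff_le_add.1 (h x y z w)
  simp only [gromovProduct] at this
  rcases min_le_iff.1 this with hmin | hmin
  · left; linarith
  · right; linarith

theorem GromovHyperbolic.min_min_sub_le (h : GromovHyperbolic α δ) (x y z u w : α) :
    min (gromovProduct x y w) (min (gromovProduct y z w) (gromovProduct z u w)) - 2 * δ ≤
      gromovProduct x u w := by
  set m := min (gromovProduct x y w) (min (gromovProduct y z w) (gromovProduct z u w))
  have hm : m ≤ gromovProduct x y w := min_le_left _ _
  have hm' : m ≤ min (gromovProduct y z w) (gromovProduct z u w) := min_le_right _ _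
  have hmin : m - δ ≤ min (gromovProduct x y w) (gromovProduct y u w) :=
    le_min (by linarith [h.nonneg w]) (by linarith [h y z u w])
  linarith [h x y u w]

theorem GromovHyperbolic.gromovProduct_le_of_lt (h : GromovHyperbolic α δ)
    {x y u v w : α} (huv : gromovProduct u v w = 0) (hux : 2 * δ < gromovProduct u x w)
    (hyv : 2 * δ < gromovProduct y v w) : gromovProduct x y w ≤ 2 * δ := by
  by_contra! hxy
  linarith [h.min_min_sub_le u x y v w, lt_min hux (lt_min hxy hyv)]

theorem GromovHyperbolic.dist_le_abs_sub_add (h : GromovHyperbolic α δ) {x y w w' : α} {ε : ℝ}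
    (hw : gromovProduct x y w ≤ ε) (hw' : gromovProduct x y w' ≤ ε) :
    dist w w' ≤ |dist x w - dist x w'| + 2 * ε + 2 * δ := by
  simp only [gromovProduct] at hw hw'
  have hle := le_abs_self (dist x w - dist x w')
  have hge := neg_abs_le (dist x w - dist x w')
  rcases h.four_point w x w' y with h4 | h4 <;>
    linarith [dist_comm w x, dist_comm w y, dist_comm y w']

theorem GromovHyperbolic.dist_le_of_le_gromovProduct (h : GromovHyperbolic α δ)
    {o p q w v : α} {t : ℝ} (hw : dist o w = t) (hwp : dist w p = dist o p - t)
    (hv : dist o v = t) (hvq : dist v q = dist o q - t) (ht : t ≤ gromovProduct p q o) :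
    dist w v ≤ 4 * δ := by
  have hwp' : t ≤ gromovProduct w p o := by
    simp only [gromovProduct]
    linarith [dist_comm w o, dist_comm p o]
  have hqv' : t ≤ gromovProduct q v o := by
    simp only [gromovProduct]
    linarith [dist_comm v o, dist_comm q o, dist_comm q v]
  have hwv := h.min_min_sub_le w p q v o
  have hmin := le_min hwp' (le_min ht hqv')
  simp only [gromovProduct] at hwv hmin
  linarith [dist_comm w o, dist_comm v o]

theorem IsDiscretelyGeodesic.exists_between (hgeo : IsDiscretelyGeodesic α) (x y : α) {r : ℝ}
    (hr : 0 ≤ r) :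
    ∃ u, gromovProduct x y u = 0 ∧ dist x u ≤ r + 1 ∧ (r ≤ dist x u ∨ u = y) := by
  have hceil := (Nat.ceil_lt_add_one hr).le
  rcases le_total (⌈r⌉₊ : ℝ) (dist x y) with hle | hle
  · obtain ⟨u, hxu, huy⟩ := hgeo x y _ hle
    refine ⟨u, ?_, by linarith, .inl (by linarith [Nat.le_ceil r])⟩
    simp only [gromovProduct]
    linarith [dist_comm u y]
  · exact ⟨y, by simp [gromovProduct], by linarith, .inr rfl⟩

/-- The bisection behind this bound halves the chain `k` times, losing `δ` each time. -/
theorem GromovHyperbolic.le_gromovProduct_of_chain (h : GromovHyperbolic α δ) {L R : ℝ}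
    (hL : 0 ≤ L) {f : ℕ → α} {w : α} (k : ℕ) {i j : ℕ} (hij : i ≤ j) (hk : j ≤ i + 2 ^ k)
    (hstep : ∀ m ∈ Set.Ico i j, dist (f m) (f (m + 1)) ≤ L)
    (hfar : ∀ m ∈ Set.Icc i j, R ≤ dist (f m) w) :
    R - L / 2 - k * δ ≤ gromovProduct (f i) (f j) w := by
  induction k generalizing i j with
  | zero =>
    have hdist : dist (f i) (f j) ≤ L := by
      rcases hij.eq_or_lt with rfl | hlt
      · simpa using hL
      · obtain rfl : j = i + 1 := by omega
        exact hstep i ⟨le_rfl, hlt⟩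
    simp only [gromovProduct, CharP.cast_eq_zero]
    linarith [hfar i ⟨le_rfl, hij⟩, hfar j ⟨hij, le_rfl⟩]
  | succ k ih =>
    rw [pow_succ] at hk
    obtain ⟨m, him, hmj, hm, hm'⟩ : ∃ m, i ≤ m ∧ m ≤ j ∧ m ≤ i + 2 ^ k ∧ j ≤ m + 2 ^ k :=
      ⟨i + (j - i) / 2, by omega, by omega, by omega, by omega⟩
    have hleft := ih him hm (fun a ha => hstep a ⟨ha.1, ha.2.trans_le hmj⟩)
      (fun a ha => hfar a ⟨ha.1, ha.2.trans hmj⟩)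
    have hright := ih hmj hm' (fun a ha => hstep a ⟨him.trans ha.1, ha.2⟩)
      (fun a ha => hfar a ⟨him.trans ha.1, ha.2⟩)
    push_cast
    linarith [h (f i) (f m) (f j) w, le_min hleft hright]

theorem eventually_exists_nat_le_two_pow (a b c e : ℝ) :
    ∀ᶠ D : ℝ in atTop, ∃ k : ℕ, a * D + b ≤ 2 ^ k ∧ e + k * c < D := by
  set C : ℝ := 2 * (|c| + 1) with hC
  have hC0 : 0 < C := by positivity
  have hexp : ∀ᶠ k : ℕ in atTop, |a| * C * k + (|a| * C + b) ≤ 2 ^ k := by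
    have hlin := (isLittleO_coe_const_pow_of_one_lt (R := ℝ) one_lt_two).const_mul_left (|a| * C)
    have hconst := (isLittleO_pow_const_const_pow_of_one_lt (R := ℝ) 0
      one_lt_two).const_mul_left (|a| * C + b)
    filter_upwards [(hlin.add hconst).bound one_pos] with k hk
    rw [pow_zero, mul_one, one_mul, Real.norm_of_nonneg (by positivity : (0 : ℝ) ≤ 2 ^ k)] at hk
    exact (le_abs_self _).trans hk
  filter_upwards [(tendsto_nat_floor_atTop.comp (tendsto_id.atTop_div_const hC0)).eventually hexp,
    eventually_gt_atTop (2 * e), eventually_ge_atTop 0] with D hD he hD0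
  simp only [Function.comp_apply, id_eq] at hD
  refine ⟨⌊D / C⌋₊, ?_, ?_⟩
  · have hlt := (div_lt_iff₀ hC0).1 (Nat.lt_floor_add_one (D / C))
    have := mul_le_mul_of_nonneg_left hlt.le (abs_nonneg a)
    linarith [mul_le_mul_of_nonneg_right (le_abs_self a) hD0]
  · have hle := (le_div_iff₀ hC0).1 (Nat.floor_le (div_nonneg hD0 hC0.le))
    have := mul_le_mul_of_nonneg_left (le_abs_self c) (Nat.cast_nonneg (α := ℝ) ⌊D / C⌋₊)
    rw [hC] at hle this ⊢
    linarith [Nat.cast_nonneg (α := ℝ) ⌊D / (2 * (|c| + 1))⌋₊]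

theorem IsQuasigeodesicChain.nonneg {lam : ℝ} {n : ℕ} {f : ℕ → α}
    (hf : IsQuasigeodesicChain lam n f) : 0 ≤ lam := by
  simpa using hf.sub_le 0 0 le_rfl n.zero_le

/-- Avoiding the ball of radius `D` costs a path length exponential in `D`, which a quasigeodesic
whose endpoints are at distance linear in `D` does not have. -/
theorem GromovHyperbolic.eventually_lt_gromovProduct (h : GromovHyperbolic α δ)
    (lam a b e : ℝ) :
    ∀ᶠ D : ℝ in atTop, ∀ (n : ℕ) (f : ℕ → α), IsQuasigeodesicChain lam n f →
      ∀ w, (∀ m ≤ n, D ≤ dist (f m) w) → ∀ i ≤ n, ∀ j ≤ n, dist (f i) (f j) ≤ a * D + b →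
        e < gromovProduct (f i) (f j) w := by
  filter_upwards [eventually_exists_nat_le_two_pow (lam * a) (lam * b + lam) δ (e + lam / 2)]
    with D ⟨k, hpow, hkD⟩ n f hf w hfar i hi j hj hdist
  wlog hij : i ≤ j generalizing i j
  · rw [gromovProduct_comm]
    exact this j hj i hi (by rwa [dist_comm]) (le_of_not_ge hij)
  have hlen : (j : ℝ) ≤ (i + 2 ^ k : ℕ) := by
    push_cast
    linarith [hf.sub_le i j hij hj, mul_le_mul_of_nonneg_left hdist hf.nonneg]
  have := h.le_gromovProduct_of_chain hf.nonneg k hij (Nat.cast_le.1 hlen)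
    (fun m hm => hf.dist_succ_le m (hm.2.trans_le hj)) (fun m hm => hfar m (hm.2.trans hj))
  linarith

theorem IsDiscretelyGeodesic.exists_le_gromovProduct (hgeo : IsDiscretelyGeodesic α)
    {A : Set α} {x w : α} {D : ℝ} (hx : x ∈ A) (hD : 0 ≤ D) (hfar : ∀ a ∈ A, D ≤ dist a w)
    (hnear : ∀ u, gromovProduct w x u = 0 → ∃ a ∈ A, dist u a < D + 1) :
    ∃ u, gromovProduct w x u = 0 ∧ ∃ a ∈ A, dist a w ≤ 3 * D + 3 ∧ D ≤ gromovProduct u a w := by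
  obtain ⟨u, hu, hle, hge | rfl⟩ := hgeo.exists_between w x (r := 2 * D + 1) (by linarith)
  · obtain ⟨a, ha, hua⟩ := hnear u hu
    refine ⟨u, hu, a, ha, by linarith [dist_triangle_left a w u, dist_comm u w], ?_⟩
    simp only [gromovProduct]
    linarith [hfar a ha, dist_comm u w]
  · refine ⟨u, hu, u, hx, by linarith [dist_comm u w], ?_⟩
    simp only [gromovProduct, dist_self]
    linarith [hfar u hx]

/-- The two points are found near the geodesic, at distance about `2 * D` on either side of `w`
(or at its endpoints). -/
theorem GromovHyperbolic.exists_gromovProduct_le_of_far (h : GromovHyperbolic α δ)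
    (hgeo : IsDiscretelyGeodesic α) {A : Set α} {x y w : α} {D : ℝ} (hx : x ∈ A) (hy : y ∈ A)
    (hw : gromovProduct x y w = 0) (hD : 2 * δ < D) (hfar : ∀ a ∈ A, D ≤ dist a w)
    (hnear : ∀ u, gromovProduct x y u = 0 → ∃ a ∈ A, dist u a < D + 1) :
    ∃ a ∈ A, ∃ b ∈ A, dist a b ≤ 6 * D + 6 ∧ gromovProduct a b w ≤ 2 * δ := by
  have hD0 : 0 ≤ D := by linarith [h.nonneg w]
  have between_left : ∀ u, gromovProduct w x u = 0 → gromovProduct x y u = 0 := fun u hu => by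
    refine le_antisymm ?_ (gromovProduct_nonneg x y u)
    simp only [gromovProduct] at hw hu ⊢
    linarith [dist_triangle y w u, dist_comm w x]
  have between_right : ∀ u, gromovProduct w y u = 0 → gromovProduct x y u = 0 := fun u hu => by
    refine le_antisymm ?_ (gromovProduct_nonneg x y u)
    simp only [gromovProduct] at hw hu ⊢
    linarith [dist_triangle x w u, dist_comm w y]
  obtain ⟨u, hu, a, ha, haw, hua⟩ := hgeo.exists_le_gromovProduct hx hD0 hfar
    fun u hu => hnear u (between_left u hu)
  obtain ⟨v, hv, b, hb, hbw, hvb⟩ := hgeo.exists_le_gromovProduct hy hD0 hfar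
    fun v hv => hnear v (between_right v hv)
  have huv : gromovProduct u v w = 0 := by
    refine le_antisymm ?_ (gromovProduct_nonneg u v w)
    simp only [gromovProduct] at hw hu hv ⊢
    linarith [dist_triangle4 x u v y, dist_comm u w, dist_comm v w, dist_comm x u, dist_comm v y,
      dist_comm w x, dist_comm w y]
  rw [gromovProduct_comm] at hvb
  exact ⟨a, ha, b, hb, by linarith [dist_triangle_right a b w],
    h.gromovProduct_le_of_lt huv (by linarith) (by linarith)⟩

theorem exists_between_forall_infDist_lt {x y : α} {A : Set α} (hx : x ∈ A) :
    ∃ w, gromovProduct x y w = 0 ∧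
      ∀ u, gromovProduct x y u = 0 → infDist u A < infDist w A + 1 := by
  set S := (infDist · A) '' {u | gromovProduct x y u = 0}
  have hbdd : BddAbove S := by
    refine ⟨dist x y, ?_⟩
    rintro _ ⟨u, hu, rfl⟩
    refine (infDist_le_dist_of_mem hx).trans ?_
    simp only [Set.mem_ofPred_eq, gromovProduct] at hu
    linarith [dist_comm u x, dist_nonneg (x := y) (y := u)]
  have hne : S.Nonempty := ⟨_, x, by simp [gromovProduct, dist_comm], rfl⟩
  obtain ⟨_, ⟨w, hw, rfl⟩, hlt⟩ := exists_lt_of_lt_csSup hne (sub_one_lt (sSup S))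
  exact ⟨w, hw, fun u hu => by linarith [le_csSup hbdd ⟨u, hu, rfl⟩]⟩

/-- One half of the Morse lemma on the stability of quasigeodesics. -/
theorem GromovHyperbolic.exists_dist_lt_of_gromovProduct_eq_zero (h : GromovHyperbolic α δ)
    (hgeo : IsDiscretelyGeodesic α) (lam : ℝ) :
    ∃ B : ℝ, ∀ (n : ℕ) (f : ℕ → α), IsQuasigeodesicChain lam n f →
      ∀ w, gromovProduct (f 0) (f n) w = 0 → ∃ i ≤ n, dist w (f i) < B := by
  obtain ⟨B, hB⟩ := eventually_atTop.1
    ((h.eventually_lt_gromovProduct lam 6 6 (2 * δ)).and (eventually_gt_atTop (2 * δ)))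
  refine ⟨B + 1, fun n f hf => ?_⟩
  set A := f '' Set.Iic n
  have h0 : f 0 ∈ A := ⟨0, n.zero_le, rfl⟩
  have hn : f n ∈ A := ⟨n, Set.self_mem_Iic, rfl⟩
  obtain ⟨w, hw, hmax⟩ := exists_between_forall_infDist_lt (y := f n) h0
  have hnear : ∀ u, gromovProduct (f 0) (f n) u = 0 → ∃ a ∈ A, dist u a < infDist w A + 1 :=
    fun u hu => (infDist_lt_iff ⟨_, h0⟩).1 (hmax u hu)
  have hfar : ∀ a ∈ A, infDist w A ≤ dist a w := fun a ha => by
    rw [dist_comm]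
    exact infDist_le_dist_of_mem ha
  have hle : infDist w A < B := by
    by_contra! hBD
    obtain ⟨hlt, hδD⟩ := hB _ hBD
    obtain ⟨_, ⟨i, hi, rfl⟩, _, ⟨j, hj, rfl⟩, hdist, hprod⟩ :=
      h.exists_gromovProduct_le_of_far hgeo h0 hn hw hδD hfar hnear
    exact (hlt n f hf w (fun m hm => hfar _ ⟨m, hm, rfl⟩) i hi j hj hdist).not_ge hprod
  intro u hu
  obtain ⟨_, ⟨i, hi, rfl⟩, hui⟩ := hnear u hu
  exact ⟨i, hi, by linarith⟩

theorem GromovHyperbolic.exists_between_dist_le (h : GromovHyperbolic α δ)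
    (hgeo : IsDiscretelyGeodesic α) (x y w : α) :
    ∃ u, gromovProduct x y u = 0 ∧ dist u w ≤ gromovProduct x y w + 2 * δ + 1 := by
  -- on a tree, `u` would be the projection of `w` to the geodesic from `x` to `y`
  set r := gromovProduct w y x with hr
  have hr0 : 0 ≤ r := gromovProduct_nonneg w y x
  have hry : r ≤ dist x y := by
    rw [hr, gromovProduct_comm, dist_comm]
    exact gromovProduct_le_dist_left y w x
  have hfloor := Nat.floor_le hr0
  have hfloor' := Nat.lt_floor_add_one r
  obtain ⟨u, hxu, huy⟩ := hgeo x y ⌊r⌋₊ (hfloor.trans hry)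
  refine ⟨u, ?_, ?_⟩
  · simp only [gromovProduct]
    linarith [dist_comm u y]
  · simp only [gromovProduct] at hr ⊢
    rcases h.four_point x w y u with h4 | h4 <;>
      linarith [dist_comm u w, dist_comm w x, dist_comm y x, dist_comm y u, dist_comm w y]

theorem GromovHyperbolic.exists_dist_le_gromovProduct_add (h : GromovHyperbolic α δ)
    (hgeo : IsDiscretelyGeodesic α) (lam : ℝ) :
    ∃ B : ℝ, ∀ (n : ℕ) (f : ℕ → α), IsQuasigeodesicChain lam n f →
      ∀ w, ∃ i ≤ n, dist (f i) w ≤ gromovProduct (f 0) (f n) w + B := by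
  obtain ⟨B, hB⟩ := h.exists_dist_lt_of_gromovProduct_eq_zero hgeo lam
  refine ⟨B + 2 * δ + 1, fun n f hf w => ?_⟩
  obtain ⟨u, hu, huw⟩ := h.exists_between_dist_le hgeo (f 0) (f n) w
  obtain ⟨i, hi, hui⟩ := hB n f hf u hu
  exact ⟨i, hi, by linarith [dist_triangle_left (f i) w u]⟩

theorem GromovHyperbolic.exists_dist_le_of_isQuasiconvexSet (h : GromovHyperbolic α δ)
    (hgeo : IsDiscretelyGeodesic α) {A₁ A₂ : Set α} {R₁ R₂ : ℝ} (h₁ : IsQuasiconvexSet R₁ A₁)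
    (h₂ : IsQuasiconvexSet R₂ A₂) {o p q : α} (ho₁ : o ∈ A₁) (ho₂ : o ∈ A₂) (hp : p ∈ A₁)
    (hq : q ∈ A₂) {t : ℕ} (ht : t ≤ gromovProduct p q o) :
    ∃ a ∈ A₁, ∃ b ∈ A₂, t ≤ dist a o + R₁ ∧ dist a b ≤ R₁ + 4 * δ + R₂ := by
  have hop : (t : ℝ) ≤ dist o p := by
    rw [dist_comm]
    exact ht.trans (gromovProduct_le_dist_left p q o)
  have hoq : (t : ℝ) ≤ dist o q := by
    rw [gromovProduct_comm] at ht
    rw [dist_comm]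
    exact ht.trans (gromovProduct_le_dist_left q p o)
  obtain ⟨w, how, hwp⟩ := hgeo o p t hop
  obtain ⟨v, hov, hvq⟩ := hgeo o q t hoq
  have hwv : dist w v ≤ 4 * δ := h.dist_le_of_le_gromovProduct how hwp hov hvq ht
  obtain ⟨a, ha, haw⟩ := h₁ o ho₁ p hp w (by
    simp only [gromovProduct]; linarith [dist_comm p w])
  obtain ⟨b, hb, hbv⟩ := h₂ o ho₂ q hq v (by
    simp only [gromovProduct]; linarith [dist_comm q v])
  exact ⟨a, ha, b, hb, by linarith [dist_triangle_left o w a, dist_comm o a],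
    by linarith [dist_triangle4 a w v b, dist_comm b v]⟩

end Hyperbolic

section Action

variable {M α : Type*} [Monoid M] [PseudoMetricSpace α] [MulAction M α] [IsIsometricSMul M α]
  {δ : ℝ}

theorem dist_pow_smul_le (g : M) (x : α) (n : ℕ) : dist x (g ^ n • x) ≤ n * dist x (g • x) := by
  induction n with
  | zero => simp
  | succ n ih =>
    have hstep : dist (g ^ n • x) (g ^ (n + 1) • x) = dist x (g • x) := by
      rw [pow_succ, mul_smul, dist_smul]
    push_cast
    linarith [dist_triangle x (g ^ n • x) (g ^ (n + 1) • x)]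

/-- An isometry whose square moves a point much farther than the isometry itself does is
loxodromic. -/
theorem GromovHyperbolic.le_dist_pow_smul (h : GromovHyperbolic α δ) {g : M} {x : α}
    (hg : dist x (g • x) + 2 * δ + 1 ≤ dist x (g • g • x)) (n : ℕ) :
    (n : ℝ) ≤ dist x (g ^ n • x) := by
  have hsucc : ∀ n, dist x (g ^ n • x) + 1 ≤ dist x (g ^ (n + 1) • x) := by
    intro n
    induction n with
    | zero =>
      have htri := dist_triangle x (g • x) (g • g • x)
      rw [dist_smul] at htri
      simp only [pow_zero, one_smul, dist_self, zero_add, pow_one]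
      linarith [h.nonneg x]
    | succ n ih =>
      have hstep : ∀ y : α, dist (g ^ n • y) (g ^ (n + 1) • y) = dist y (g • y) := fun y => by
        rw [pow_succ, mul_smul, dist_smul]
      have h01 := hstep x
      have h12 : dist (g ^ (n + 1) • x) (g ^ (n + 1 + 1) • x) = dist x (g • x) := by
        rw [pow_succ g (n + 1), mul_smul, dist_smul]
      have h02 : dist (g ^ n • x) (g ^ (n + 1 + 1) • x) = dist x (g • g • x) := by
        rw [pow_succ, pow_succ, mul_smul, mul_smul, dist_smul]
      rcases h.four_point x (g ^ n • x) (g ^ (n + 1) • x) (g ^ (n + 1 + 1) • x) with h4 | h4 <;>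
        linarith
  induction n with
  | zero => simp
  | succ n ih =>
    push_cast
    linarith [hsucc n]

theorem GromovHyperbolic.abs_dist_smul_smul_sub_le (h : GromovHyperbolic α δ) {g : M} {o x : α}
    (hg : dist o (g • o) + dist x (g • x) + 2 * δ < 2 * dist o (g • x)) :
    |dist o (g • g • x) + dist o x - 2 * dist o (g • x)| ≤ 2 * δ := by
  have hx := dist_smul g o x
  have hgx := dist_smul g o (g • x)
  have hxx := dist_smul g x (g • x)
  refine abs_le.2 ⟨?_, ?_⟩
  · rcases h.four_point o (g • o) (g • x) (g • g • x) with h4 | h4 <;> linarith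
  · rcases h.four_point o (g • o) (g • g • x) (g • x) with h4 | h4 <;>
      linarith [h.nonneg o, dist_comm (g • g • x) (g • x)]

/-- Deep inside a geodesic whose endpoints it displaces by little, an isometry acts almost as a
translation along that geodesic. -/
theorem GromovHyperbolic.two_mul_dist_smul_le (h : GromovHyperbolic α δ) {g : M} {o x y : α}
    {r : ℝ} (hx : gromovProduct o y x = 0) (hgo : dist o (g • o) ≤ r) (hgy : dist y (g • y) ≤ r)
    (hox : 2 * r + 4 * δ < dist o x) (hyx : 2 * r + 4 * δ < dist y x) :
    2 * dist x (g • x) ≤ dist x (g • g • x) + 14 * δ := by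
  have hδ := h.nonneg o
  have hr : 0 ≤ r := dist_nonneg.trans hgo
  have hdo := dist_smul g o x
  have hdy := dist_smul g y x
  have htri := dist_triangle_left (g • o) (g • x) o
  have hgx : gromovProduct o y (g • x) ≤ 2 * δ := by
    refine h.gromovProduct_le_of_lt (u := g • o) (v := g • y) ?_ ?_ ?_
    · simpa only [gromovProduct, dist_smul] using hx
    · simp only [gromovProduct]
      linarith [dist_triangle (g • o) o (g • x), dist_comm o (g • o)]
    · simp only [gromovProduct]
      linarith [dist_triangle (g • y) y (g • x), dist_comm y (g • y)]
  have hdist : dist x (g • x) ≤ |dist o x - dist o (g • x)| + 6 * δ := by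
    linarith [h.dist_le_abs_sub_add (hx.le.trans (by linarith : 0 ≤ 2 * δ)) hgx]
  have hgox : |dist o x - dist o (g • x)| ≤ r :=
    abs_le.2 ⟨by linarith [dist_triangle o (g • o) (g • x)],
      by linarith [dist_triangle (g • o) o (g • x), dist_comm o (g • o)]⟩
  have hprog := abs_le.1 (h.abs_dist_smul_smul_sub_le (g := g) (o := o) (x := x)
    (by linarith [abs_le.1 hgox]))
  have htri_o := dist_triangle o x (g • g • x)
  have htri_x := dist_triangle_right o x (g • g • x)
  rcases abs_cases (dist o x - dist o (g • x)) with ⟨habs, _⟩ | ⟨habs, _⟩ <;>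
    linarith

end Action

/-- For fixed `u`, the elements `a ∈ C₁` with `a * u ∈ C₂` lie in a single coset of `C₁ ⊓ C₂`. -/
theorem finite_setOf_exists_inv_mul_mem {G : Type*} [Group G] {C₁ C₂ : Subgroup G}
    (hfin : ((C₁ ⊓ C₂ : Subgroup G) : Set G).Finite) {S : Set G} (hS : S.Finite) :
    {a | a ∈ C₁ ∧ ∃ b ∈ C₂, a⁻¹ * b ∈ S}.Finite := by
  have hcoset : ∀ u, {a | a ∈ C₁ ∧ a * u ∈ C₂}.Finite := fun u => by
    rcases Set.eq_empty_or_nonempty {a | a ∈ C₁ ∧ a * u ∈ C₂} with hempty | ⟨a₀, ha₀, ha₀u⟩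
    · exact hempty ▸ Set.finite_empty
    · refine (hfin.image (· * a₀)).subset fun a ⟨ha, hau⟩ =>
        ⟨a * a₀⁻¹, ⟨C₁.mul_mem ha (C₁.inv_mem ha₀), ?_⟩, inv_mul_cancel_right a a₀⟩
      simpa [mul_assoc] using C₂.mul_mem hau (C₂.inv_mem ha₀u)
  refine (hS.biUnion fun u _ => hcoset u).subset fun a ⟨ha, b, hb, hab⟩ => ?_
  exact Set.mem_biUnion hab ⟨ha, by simpa using hb⟩

section InvariantMetric

variable {G : Type*} [Group G] [PseudoMetricSpace G] [IsIsometricSMul G G] {δ : ℝ}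

theorem exists_forall_exists_lt_dist_pow_mul (hball : ∀ r, (closedBall (1 : G) r).Finite) {g : G}
    (hg : ¬IsOfFinOrder g) (r : ℝ) : ∃ m : ℕ, ∀ x, ∃ i ≤ m, r < dist x (g ^ i * x) := by
  refine ⟨(hball r).toFinset.card, fun x => ?_⟩
  by_contra! hle
  have hmaps : ∀ i ∈ Finset.range ((hball r).toFinset.card + 1),
      x⁻¹ * (g ^ i * x) ∈ (hball r).toFinset := fun i hi => by
    rw [Set.Finite.mem_toFinset, mem_closedBall', ← dist_mul_left x, mul_one, mul_inv_cancel_left]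
    exact hle i (Finset.mem_range_succ_iff.1 hi)
  have hcard := Finset.card_le_card_of_injOn _ hmaps fun i _ j _ hij =>
    injective_pow_iff_not_isOfFinOrder.2 hg (mul_right_cancel (mul_left_cancel hij))
  rw [Finset.card_range] at hcard
  exact hcard.not_gt (Nat.lt_succ_self _)

/-- Otherwise the powers `g ^ i` with `i ≤ m` would all displace the midpoint of a long geodesic
from `1` to `g ^ k` by a bounded amount, because they almost fix its endpoints. -/
theorem GromovHyperbolic.exists_pow_displacement (h : GromovHyperbolic G δ)
    (hgeo : IsDiscretelyGeodesic G) (hball : ∀ r, (closedBall (1 : G) r).Finite) {g : G}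
    (hg : ¬IsOfFinOrder g) :
    ∃ (i : ℕ) (x : G), dist x (g ^ i • x) + 2 * δ + 1 ≤ dist x (g ^ i • g ^ i • x) := by
  by_contra! hlt
  obtain ⟨m, hm⟩ := exists_forall_exists_lt_dist_pow_mul hball hg (16 * δ + 1)
  set r := m * dist 1 g
  have hr : 0 ≤ r := by positivity
  have hδ := h.nonneg 1
  obtain ⟨_, hk⟩ := exists_forall_exists_lt_dist_pow_mul hball hg (4 * r + 8 * δ + 3)
  obtain ⟨k, -, hk⟩ := hk 1
  rw [mul_one] at hk
  obtain ⟨x, hx, hle, hge | rfl⟩ := hgeo.exists_between 1 (g ^ k)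
    (r := 2 * r + 4 * δ + 1) (by linarith)
  · obtain ⟨i, hi, hix⟩ := hm x
    have hone : dist 1 (g ^ i) ≤ r := by
      refine le_trans ?_ (mul_le_mul_of_nonneg_right (Nat.cast_le.2 hi) dist_nonneg)
      simpa using dist_pow_smul_le g (1 : G) i
    have hgk : dist (g ^ k) (g ^ i • g ^ k) ≤ r := by
      rw [smul_eq_mul, ← pow_mul_comm, ← smul_eq_mul]
      simpa using (dist_smul (g ^ k) 1 (g ^ i)).trans_le hone
    have := h.two_mul_dist_smul_le hx (by simpa using hone) hgk (by linarith)
      (by linarith [dist_triangle_right 1 (g ^ k) x])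
    have hlti := hlt i x
    simp only [smul_eq_mul] at this hlti
    linarith
  · linarith

theorem GromovHyperbolic.exists_le_mul_dist_one_pow (h : GromovHyperbolic G δ)
    (hgeo : IsDiscretelyGeodesic G) (hball : ∀ r, (closedBall (1 : G) r).Finite) {g : G}
    (hg : ¬IsOfFinOrder g) :
    ∃ lam : ℝ, 0 ≤ lam ∧ ∀ n : ℕ, (n : ℝ) ≤ lam * dist 1 (g ^ n) + lam := by
  obtain ⟨i, x, hix⟩ := h.exists_pow_displacement hgeo hball hg
  refine ⟨i + 2 * dist 1 x, by positivity, fun n => ?_⟩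
  have hgrow : (n : ℝ) ≤ dist x ((g ^ n) ^ i • x) := by
    rw [pow_right_comm]
    exact h.le_dist_pow_smul hix n
  have hpow : dist 1 ((g ^ n) ^ i) ≤ i * dist 1 (g ^ n) := by
    simpa using dist_pow_smul_le (g ^ n) (1 : G) i
  have hx : dist ((g ^ n) ^ i) ((g ^ n) ^ i • x) = dist 1 x := by
    simpa using dist_smul ((g ^ n) ^ i) 1 x
  have htri := dist_triangle4 x 1 ((g ^ n) ^ i) ((g ^ n) ^ i • x)
  have : 0 ≤ dist 1 x * dist 1 (g ^ n) := by positivity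
  linarith [dist_comm x 1, (Nat.cast_nonneg i : (0 : ℝ) ≤ i)]

theorem GromovHyperbolic.exists_zpow_eq_natAbs_le (h : GromovHyperbolic G δ)
    (hgeo : IsDiscretelyGeodesic G) (hball : ∀ r, (closedBall (1 : G) r).Finite) (g : G) :
    ∃ lam : ℝ, 0 ≤ lam ∧ ∀ n : ℤ, ∃ m : ℤ, g ^ m = g ^ n ∧
      (m.natAbs : ℝ) ≤ lam * dist 1 (g ^ n) + lam := by
  by_cases hg : IsOfFinOrder g
  · refine ⟨orderOf g, by positivity, fun n => ⟨n % orderOf g, zpow_mod_orderOf g n, ?_⟩⟩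
    have hlt : (n % orderOf g).natAbs ≤ orderOf g := by
      have := Int.emod_lt_of_pos n (Int.natCast_pos.2 hg.orderOf_pos)
      have := Int.emod_nonneg n (Int.natCast_ne_zero.2 hg.orderOf_pos.ne')
      omega
    have : (0 : ℝ) ≤ orderOf g * dist 1 (g ^ n) := by positivity
    linarith [(Nat.cast_le (α := ℝ)).2 hlt]
  · obtain ⟨lam, hlam, hle⟩ := h.exists_le_mul_dist_one_pow hgeo hball hg
    refine ⟨lam, hlam, fun n => ⟨n, rfl, ?_⟩⟩
    obtain ⟨k, rfl | rfl⟩ := n.eq_nat_or_neg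
    · simpa using hle k
    · have hinv : dist 1 (g ^ k)⁻¹ = dist 1 (g ^ k) := by
        rw [← dist_mul_left (g ^ k), mul_one, mul_inv_cancel, dist_comm]
      simpa [hinv] using hle k

theorem GromovHyperbolic.exists_gromovProduct_le (h : GromovHyperbolic G δ)
    (hgeo : IsDiscretelyGeodesic G) (hball : ∀ r, (closedBall (1 : G) r).Finite)
    {C₁ C₂ : Subgroup G} {R₁ R₂ : ℝ} (h₁ : IsQuasiconvexSet R₁ (C₁ : Set G))
    (h₂ : IsQuasiconvexSet R₂ (C₂ : Set G)) (hfin : ((C₁ ⊓ C₂ : Subgroup G) : Set G).Finite) :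
    ∃ D : ℝ, ∀ p ∈ C₁, ∀ q ∈ C₂, gromovProduct p q 1 ≤ D := by
  obtain ⟨E, hE⟩ := ((finite_setOf_exists_inv_mul_mem hfin
    (hball (R₁ + 4 * δ + R₂))).image (dist · 1)).bddAbove
  refine ⟨E + R₁ + 1, fun p hp q hq => ?_⟩
  obtain ⟨a, ha, b, hb, hta, hab⟩ := h.exists_dist_le_of_isQuasiconvexSet hgeo h₁ h₂ C₁.one_mem
    C₂.one_mem hp hq (Nat.floor_le (gromovProduct_nonneg p q 1))
  have haE : dist a 1 ≤ E := hE ⟨a, ⟨ha, b, hb, by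
    rwa [mem_closedBall', ← dist_mul_left a, mul_one, mul_inv_cancel_left]⟩, rfl⟩
  linarith [Nat.lt_floor_add_one (gromovProduct p q 1)]

end InvariantMetric

section WordMetric

variable {G H : Type*} [Group G] [Group H] {X : Set H} {Y : Set G} {δ : ℝ}

theorem wordLength_list_prod_le {l : List G} (hl : ∀ y ∈ l, y ∈ Y) :
    wordLength Y l.prod ≤ l.length :=
  Nat.sInf_le ⟨l, rfl, hl, rfl⟩

theorem wordLength_one : wordLength Y (1 : G) = 0 :=
  Nat.le_zero.1 (wordLength_list_prod_le (l := []) (by simp))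

theorem wordLength_le_one_of_mem {y : G} (hy : y ∈ Y) : wordLength Y y ≤ 1 := by
  simpa using wordLength_list_prod_le (Y := Y) (l := [y]) (by simpa)

theorem IsSymmGen.exists_list (hY : IsSymmGen Y) (g : G) :
    ∃ l : List G, l.length = wordLength Y g ∧ (∀ y ∈ l, y ∈ Y) ∧ l.prod = g := by
  refine Nat.sInf_mem
    (s := {n : ℕ | ∃ l : List G, l.length = n ∧ (∀ y ∈ l, y ∈ Y) ∧ l.prod = g}) ?_
  have hg : g ∈ (Subgroup.closure Y).toSubmonoid := hY.2.2 ▸ Subgroup.mem_top g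
  rw [Subgroup.closure_toSubmonoid, Set.union_eq_self_of_subset_right fun y hy =>
    inv_inv y ▸ hY.2.1 _ hy] at hg
  obtain ⟨l, hl, rfl⟩ := Submonoid.exists_list_of_mem_closure hg
  exact ⟨l.length, l, rfl, hl, rfl⟩

theorem IsSymmGen.wordLength_mul_le (hY : IsSymmGen Y) (g h : G) :
    wordLength Y (g * h) ≤ wordLength Y g + wordLength Y h := by
  obtain ⟨l, hl, hlY, rfl⟩ := hY.exists_list g
  obtain ⟨m, hm, hmY, rfl⟩ := hY.exists_list h
  rw [← hl, ← hm, ← List.prod_append, ← List.length_append]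
  exact wordLength_list_prod_le (List.forall_mem_append.2 ⟨hlY, hmY⟩)

theorem IsSymmGen.wordLength_inv_le (hY : IsSymmGen Y) (g : G) :
    wordLength Y g⁻¹ ≤ wordLength Y g := by
  obtain ⟨l, hl, hlY, rfl⟩ := hY.exists_list g
  rw [List.prod_inv_reverse, ← hl]
  refine (wordLength_list_prod_le fun y hy => ?_).trans (by simp)
  obtain ⟨x, hx, rfl⟩ := List.mem_map.1 (List.mem_reverse.1 hy)
  exact hY.2.1 x (hlY x hx)

theorem IsSymmGen.wordLength_inv (hY : IsSymmGen Y) (g : G) :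
    wordLength Y g⁻¹ = wordLength Y g :=
  (hY.wordLength_inv_le g).antisymm (by simpa using hY.wordLength_inv_le g⁻¹)

theorem IsSymmGen.wordLength_zpow_le (hY : IsSymmGen Y) {g : G} (hg : g ∈ Y) (n : ℤ) :
    wordLength Y (g ^ n) ≤ n.natAbs := by
  have hnat : ∀ k : ℕ, wordLength Y (g ^ k) ≤ k := fun k => by
    simpa using wordLength_list_prod_le (Y := Y) (l := List.replicate k g)
      fun y hy => (List.eq_of_mem_replicate hy).symm ▸ hg
  obtain ⟨k, rfl | rfl⟩ := n.eq_nat_or_neg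
  · simpa using hnat k
  · simpa [hY.wordLength_inv] using hnat k

theorem IsSymmGen.finite_wordLength_le (hY : IsSymmGen Y) (n : ℕ) :
    {g : G | wordLength Y g ≤ n}.Finite := by
  have := hY.1.to_subtype
  refine ((List.finite_length_le Y n).image fun l => (l.map Subtype.val).prod).subset fun g hg => ?_
  obtain ⟨l, hl, hlY, rfl⟩ := hY.exists_list g
  lift l to List Y using hlY
  rw [List.length_map] at hl
  exact ⟨l, hl.le.trans hg, rfl⟩

theorem IsSymmGen.exists_wordLength_map_le (hX : IsSymmGen X) (hY : IsSymmGen Y) (φ : H →* G) :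
    ∃ c : ℕ, ∀ x, wordLength Y (φ x) ≤ c * wordLength X x := by
  obtain ⟨c, hc⟩ := (hX.1.image fun x => wordLength Y (φ x)).bddAbove
  refine ⟨c, fun x => ?_⟩
  obtain ⟨l, hl, hlX, rfl⟩ := hX.exists_list x
  rw [← hl]
  clear hl
  induction l with
  | nil => simp [wordLength_one]
  | cons x l ih =>
    rw [List.forall_mem_cons] at hlX
    have hx : wordLength Y (φ x) ≤ c := hc ⟨x, hlX.1, rfl⟩
    rw [List.prod_cons, map_mul, List.length_cons, mul_add, mul_one, add_comm]
    exact (hY.wordLength_mul_le _ _).trans (add_le_add hx (ih hlX.2))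

theorem wordDist_one_left (g : G) : wordDist Y 1 g = wordLength Y g := by
  rw [wordDist, inv_one, one_mul]

/-- The word metric of a finite symmetric generating set, as a pseudometric. It is not an instance
because it depends on the generating set. -/
noncomputable abbrev IsSymmGen.wordPseudoMetric (hY : IsSymmGen Y) : PseudoMetricSpace G where
  dist x y := wordDist Y x y
  dist_self x := by simp [wordDist, wordLength_one]
  dist_comm x y := by
    rw [wordDist, ← hY.wordLength_inv]
    simp [wordDist]
  dist_triangle x y z := by
    have := hY.wordLength_mul_le (x⁻¹ * y) (y⁻¹ * z)
    rw [mul_assoc, mul_inv_cancel_left] at this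
    exact_mod_cast this

theorem IsSymmGen.isIsometricSMul (hY : IsSymmGen Y) :
    letI := hY.wordPseudoMetric
    IsIsometricSMul G G :=
  letI := hY.wordPseudoMetric
  ⟨fun g => Isometry.of_dist_eq fun x y =>
    congrArg (fun z => (wordLength Y z : ℝ)) (by simp [mul_assoc])⟩

theorem IsSymmGen.finite_closedBall (hY : IsSymmGen Y) (r : ℝ) :
    letI := hY.wordPseudoMetric
    (closedBall (1 : G) r).Finite := by
  let _ := hY.wordPseudoMetric
  refine (hY.finite_wordLength_le ⌊r⌋₊).subset fun g hg => Nat.le_floor ?_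
  have hle : (wordDist Y 1 g : ℝ) ≤ r := mem_closedBall'.1 hg
  rwa [wordDist_one_left] at hle

theorem IsSymmGen.exists_geodesic (hY : IsSymmGen Y) (x y : G) :
    ∃ f : ℕ → G, f 0 = x ∧ f (wordDist Y x y) = y ∧
      ∀ i j, i ≤ j → j ≤ wordDist Y x y → wordDist Y (f i) (f j) = j - i := by
  let _ := hY.wordPseudoMetric
  obtain ⟨l, hl, hlY, hlg⟩ := hY.exists_list (x⁻¹ * y)
  rw [← wordDist] at hl
  set f : ℕ → G := fun i => x * (l.take i).prod
  have h0 : f 0 = x := by simp [f]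
  have hn : f (wordDist Y x y) = y := by simp [f, ← hl, hlg]
  have hle : ∀ i j, i ≤ j → wordDist Y (f i) (f j) ≤ j - i := fun i j hij => by
    have hsplit : (f i)⁻¹ * f j = ((l.drop i).take (j - i)).prod := by
      obtain ⟨k, rfl⟩ := Nat.exists_eq_add_of_le hij
      simp [f, List.take_add, mul_assoc]
    rw [wordDist, hsplit]
    refine (wordLength_list_prod_le fun y hy => hlY y ?_).trans (List.length_take_le _ _)
    exact List.mem_of_mem_drop (List.mem_of_mem_take hy)
  refine ⟨f, h0, hn, fun i j hij hj => (hle i j hij).antisymm ?_⟩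
  have htri : wordDist Y x y ≤ wordDist Y x (f i) + wordDist Y (f i) (f j) + wordDist Y (f j) y :=
    Nat.cast_le.1 ((dist_triangle4 x (f i) (f j) y).trans_eq (by push_cast; rfl))
  have hi := hle 0 i i.zero_le
  have hj' := hle j _ hj
  rw [h0] at hi
  rw [hn] at hj'
  omega

theorem IsSymmGen.isDiscretelyGeodesic (hY : IsSymmGen Y) :
    letI := hY.wordPseudoMetric
    IsDiscretelyGeodesic G := by
  intro x y t ht
  obtain ⟨f, h0, hn, hf⟩ := hY.exists_geodesic x y
  have ht' : t ≤ wordDist Y x y := Nat.cast_le.1 ht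
  refine ⟨f t, ?_, ?_⟩
  · have := hf 0 t t.zero_le ht'
    rw [h0] at this
    exact congrArg Nat.cast this
  · have := hf t _ ht' le_rfl
    rw [hn] at this
    exact (congrArg Nat.cast this).trans (Nat.cast_sub ht')

/-- With `φ` the inclusion of a subgroup this turns linear distortion into quasiconvexity, and with
`φ` the identity it compares two generating sets. -/
theorem IsSymmGen.exists_wordDist_map_le_gromovProd_add (hY : IsSymmGen Y)
    (h : letI := hY.wordPseudoMetric; GromovHyperbolic G δ) (hX : IsSymmGen X) (φ : H →* G)
    {c : ℝ} (hc : ∀ x, (wordLength X x : ℝ) ≤ c * wordLength Y (φ x) + c) :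
    ∃ B : ℝ, ∀ x y w, ∃ s, wordDist X x s + wordDist X s y = wordDist X x y ∧
      (wordDist Y (φ s) w : ℝ) ≤ gromovProd Y (φ x) (φ y) w + B := by
  let _ := hY.wordPseudoMetric
  obtain ⟨b, hb⟩ := hX.exists_wordLength_map_le hY φ
  obtain ⟨B, hB⟩ := h.exists_dist_le_gromovProduct_add hY.isDiscretelyGeodesic (max b c)
  refine ⟨B, fun x y w => ?_⟩
  obtain ⟨f, h0, hn, hf⟩ := hX.exists_geodesic x y
  have hdist : ∀ s t, wordDist Y (φ s) (φ t) = wordLength Y (φ (s⁻¹ * t)) := fun s t => by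
    rw [wordDist, map_mul, map_inv]
  have hchain : IsQuasigeodesicChain (max b c : ℝ) (wordDist X x y) (φ ∘ f) := by
    refine ⟨fun i hi => le_max_of_le_left (Nat.cast_le.2 ?_), fun i j hij hj => ?_⟩
    · have := hb ((f i)⁻¹ * f (i + 1))
      rwa [← hdist, ← wordDist, hf i (i + 1) i.le_succ hi, Nat.add_sub_cancel_left,
        mul_one] at this
    · have := hc ((f i)⁻¹ * f j)
      rw [← hdist, ← wordDist, hf i j hij hj, Nat.cast_sub hij] at this
      exact this.trans (add_le_add
        (mul_le_mul_of_nonneg_right (le_max_right _ _) (Nat.cast_nonneg _)) (le_max_right _ _))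
  obtain ⟨i, hi, hle⟩ := hB _ _ hchain w
  refine ⟨f i, ?_, ?_⟩
  · have hxi := hf 0 i i.zero_le hi
    have hiy := hf i _ hi le_rfl
    rw [h0] at hxi
    rw [hn] at hiy
    omega
  · simp only [Function.comp_apply, h0, hn] at hle
    exact hle

end WordMetric

section Quasiconvex

variable {G : Type u} [Group G] {C₁ C₂ : Subgroup G} {X : Set G} {δ : ℝ}

theorem IsQuasiconvex.exists_wordLength_le (hC : IsQuasiconvex C₁) (hX : IsSymmGen X) :
    ∃ Z, IsSymmGen Z ∧ ∃ c : ℝ, ∀ a : C₁, (wordLength Z a : ℝ) ≤ c * wordLength X (a : G) + c := by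
  obtain ⟨Z, hZ, Y, hY, c, hc, hle⟩ := hC
  obtain ⟨b, hb⟩ := hX.exists_wordLength_map_le hY (MonoidHom.id G)
  refine ⟨Z, hZ, c * (b + 1), fun a => ?_⟩
  have hba : (wordLength Y (a : G) : ℝ) ≤ b * wordLength X (a : G) := mod_cast hb a
  have := mul_le_mul_of_nonneg_left hba hc.le
  have : 0 ≤ c * wordLength X (a : G) + c * b := by positivity
  linarith [hle a]

theorem IsQuasiconvex.exists_isQuasiconvexSet (hC : IsQuasiconvex C₁) (hX : IsSymmGen X)
    (h : letI := hX.wordPseudoMetric; GromovHyperbolic G δ) :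
    letI := hX.wordPseudoMetric
    ∃ R, IsQuasiconvexSet R (C₁ : Set G) := by
  obtain ⟨Z, hZ, c, hc⟩ := hC.exists_wordLength_le hX
  obtain ⟨B, hB⟩ := hX.exists_wordDist_map_le_gromovProd_add h hZ C₁.subtype hc
  refine ⟨B, fun x hx y hy w hw => ?_⟩
  obtain ⟨s, -, hs⟩ := hB ⟨x, hx⟩ ⟨y, hy⟩ w
  exact ⟨s, s.2, hs.trans_eq ((congrArg (· + B) hw).trans (zero_add B))⟩

theorem IsWordHyperbolic.exists_gromovHyperbolic (hG : IsWordHyperbolic G) :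
    ∃ (Y : Set G) (hY : IsSymmGen Y) (δ : ℝ),
      letI := hY.wordPseudoMetric
      GromovHyperbolic G δ :=
  let ⟨Y, hY, δ, _, h⟩ := hG
  ⟨Y, hY, δ, h⟩

theorem gromovProd_one_le_of_wordDist_add_eq (hX : IsSymmGen X) {p q s : G}
    (hs : wordDist X p s + wordDist X s q = wordDist X p q) :
    gromovProd X p q 1 ≤ wordDist X s 1 := by
  let _ := hX.wordPseudoMetric
  have hp : (wordDist X p 1 : ℝ) ≤ wordDist X p s + wordDist X s 1 := dist_triangle p s 1
  have hq : (wordDist X q 1 : ℝ) ≤ wordDist X s q + wordDist X s 1 := dist_triangle_left q 1 s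
  have hs' : (wordDist X p s + wordDist X s q : ℝ) = wordDist X p q := mod_cast hs
  rw [gromovProd]
  linarith

theorem IsWordHyperbolic.exists_gromovProd_le (hG : IsWordHyperbolic G) (hX : IsSymmGen X)
    (h₁ : IsQuasiconvex C₁) (h₂ : IsQuasiconvex C₂)
    (hfin : ((C₁ ⊓ C₂ : Subgroup G) : Set G).Finite) :
    ∃ D : ℝ, ∀ p ∈ C₁, ∀ q ∈ C₂, gromovProd X p q 1 ≤ D := by
  obtain ⟨Y, hY, δ, h⟩ := hG.exists_gromovHyperbolic
  let _ := hY.wordPseudoMetric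
  have := hY.isIsometricSMul
  obtain ⟨R₁, hR₁⟩ := h₁.exists_isQuasiconvexSet hY h
  obtain ⟨R₂, hR₂⟩ := h₂.exists_isQuasiconvexSet hY h
  obtain ⟨D, hD⟩ := h.exists_gromovProduct_le hY.isDiscretelyGeodesic hY.finite_closedBall
    hR₁ hR₂ hfin
  obtain ⟨c, hc⟩ := hY.exists_wordLength_map_le hX (MonoidHom.id G)
  obtain ⟨B, hB⟩ := hY.exists_wordDist_map_le_gromovProd_add h hX (MonoidHom.id G) (c := c)
    fun x => (Nat.cast_le.2 (hc x)).trans (by simp)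
  refine ⟨c * (D + B), fun p hp q hq => ?_⟩
  obtain ⟨s, hs, hs1⟩ := hB p q 1
  calc gromovProd X p q 1 ≤ wordDist X s 1 := gromovProd_one_le_of_wordDist_add_eq hX hs
    _ ≤ c * wordDist Y s 1 := mod_cast hc (s⁻¹ * 1)
    _ ≤ c * (D + B) := mul_le_mul_of_nonneg_left
        (hs1.trans (add_le_add_left (hD p hp q hq) B)) c.cast_nonneg

theorem IsVirtuallyCyclic.exists_eq_zpow_mul {C : Type u} [Group C] (hC : IsVirtuallyCyclic C) :
    ∃ (z : C) (T : Set C), T.Finite ∧ ∀ c, ∃ n : ℤ, ∃ t ∈ T, c = z ^ n * t := by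
  obtain ⟨Z, hZ, hfi⟩ := hC
  obtain ⟨z, hz⟩ := hZ.exists_generator
  refine ⟨z, Set.range fun q : C ⧸ Z => q.out⁻¹, Set.finite_range _, fun c => ?_⟩
  let q : C ⧸ Z := QuotientGroup.mk c⁻¹
  have hmem : c * q.out ∈ Z := by
    rw [← inv_inv c, ← QuotientGroup.eq, QuotientGroup.out_eq']
  obtain ⟨n, hn⟩ := Subgroup.mem_zpowers_iff.1 (hz ⟨_, hmem⟩)
  refine ⟨n, _, ⟨q, rfl⟩, ?_⟩
  rw [← Subgroup.coe_zpow, hn, mul_inv_cancel_right]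

theorem isSymmGen_union_inv {S : Set G} (hS : S.Finite) (hgen : Subgroup.closure S = ⊤) :
    IsSymmGen (S ∪ S⁻¹) := by
  refine ⟨hS.union hS.inv, fun x hx => ?_, top_le_iff.1 ?_⟩
  · simpa [or_comm] using hx
  · exact hgen ▸ Subgroup.closure_mono Set.subset_union_left

theorem exists_isSymmGen_wordLength_zpow_mul_le {z : G} {T : Set G} (hT : T.Finite)
    (h : ∀ g, ∃ n : ℤ, ∃ t ∈ T, g = z ^ n * t) :
    ∃ Z, IsSymmGen Z ∧ ∀ n : ℤ, ∀ t ∈ T, wordLength Z (z ^ n * t) ≤ n.natAbs + 1 := by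
  have hgen : Subgroup.closure (insert z T) = ⊤ := by
    refine top_le_iff.1 fun g _ => ?_
    obtain ⟨n, t, ht, rfl⟩ := h g
    exact mul_mem (zpow_mem (Subgroup.subset_closure (Set.mem_insert z T)) n)
      (Subgroup.subset_closure (Set.mem_insert_of_mem z ht))
  have hZ := isSymmGen_union_inv (hT.insert z) hgen
  refine ⟨_, hZ, fun n t ht => (hZ.wordLength_mul_le _ _).trans (add_le_add ?_ ?_)⟩
  · exact hZ.wordLength_zpow_le (.inl (Set.mem_insert z T)) n
  · exact wordLength_le_one_of_mem (.inl (Set.mem_insert_of_mem z ht))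

theorem IsWordHyperbolic.isQuasiconvex_of_isVirtuallyCyclic (hG : IsWordHyperbolic G)
    (hC : IsVirtuallyCyclic C₁) : IsQuasiconvex C₁ := by
  obtain ⟨Y, hY, δ, h⟩ := hG.exists_gromovHyperbolic
  obtain ⟨z, T, hT, hzT⟩ := hC.exists_eq_zpow_mul
  obtain ⟨Z, hZ, hZle⟩ := exists_isSymmGen_wordLength_zpow_mul_le hT hzT
  obtain ⟨E, hE⟩ := (hT.image fun t : C₁ => wordLength Y (t : G)).bddAbove
  let _ := hY.wordPseudoMetric
  have := hY.isIsometricSMul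
  obtain ⟨lam, hlam, hle⟩ := h.exists_zpow_eq_natAbs_le hY.isDiscretelyGeodesic
    hY.finite_closedBall (z : G)
  refine ⟨Z, hZ, Y, hY, lam * (E + 1) + 1, by positivity, fun a => ?_⟩
  obtain ⟨n, t, ht, rfl⟩ := hzT a
  obtain ⟨m, hmn, hm⟩ := hle n
  have hzn : wordLength Y ((z : G) ^ n) ≤ wordLength Y ((z : G) ^ n * t) + E := by
    have := hY.wordLength_mul_le ((z : G) ^ n * t) (t : G)⁻¹
    rw [mul_inv_cancel_right, hY.wordLength_inv] at this
    exact this.trans (Nat.add_le_add_left (hE ⟨t, ht, rfl⟩) _)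
  have hdist : dist 1 ((z : G) ^ n) ≤ wordLength Y ((z : G) ^ n * t) + E := by
    change (wordDist Y 1 ((z : G) ^ n) : ℝ) ≤ _
    rw [wordDist_one_left]
    exact_mod_cast hzn
  have hZm : (wordLength Z (z ^ n * t) : ℝ) ≤ m.natAbs + 1 := by
    have hzm : z ^ m = z ^ n := mod_cast hmn
    rw [← hzm]
    exact_mod_cast hZle m t ht
  push_cast
  have : (0 : ℝ) ≤ (lam * E + 1) * wordLength Y ((z : G) ^ n * t) := by positivity
  linarith [mul_le_mul_of_nonneg_left hdist hlam]

theorem exists_shortestIn (X : Set G) {S : Set G} (hS : S.Nonempty) : ∃ g, ShortestIn X g S :=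
  ⟨Function.argminOn (wordLength X) S hS, Function.argminOn_mem _ S hS,
    fun _ hs => Function.argminOn_le _ S hs⟩

end Quasiconvex

theorem shortest_coset_rep_bounded_correction_general {G : Type u} [Group G]
    (hG : IsWordHyperbolic G) (X : Set G) (hX : IsSymmGen X) (C₁ C₂ : Subgroup G)
    (h₁ : IsQuasiconvex C₁) (h₂ : IsQuasiconvex C₂)
    (hfin : ((C₁ ⊓ C₂ : Subgroup G) : Set G).Finite) :
    ∃ K₂ : ℝ, 0 < K₂ ∧
      ∀ c₁ ∈ C₁, ∃ c₂ ∈ C₂,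
        (wordLength X c₂ : ℝ) ≤ K₂ ∧
        ShortestIn X (c₁ * c₂) {x | ∃ c ∈ C₂, x = c₁ * c} := by
  obtain ⟨D, hD⟩ := hG.exists_gromovProd_le hX h₁ h₂ hfin
  refine ⟨2 * |D| + 1, by positivity, fun c₁ hc₁ => ?_⟩
  obtain ⟨_, hmin⟩ := exists_shortestIn X (S := {x | ∃ c ∈ C₂, x = c₁ * c}) ⟨_, 1, C₂.one_mem, rfl⟩
  obtain ⟨c₂, hc₂, rfl⟩ := hmin.1
  refine ⟨c₂, hc₂, ?_, hmin⟩
  have hle : (wordLength X (c₁ * c₂) : ℝ) ≤ wordLength X c₁ :=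
    Nat.cast_le.2 (hmin.2 c₁ ⟨1, C₂.one_mem, (mul_one c₁).symm⟩)
  have hprod := hD c₁⁻¹ (C₁.inv_mem hc₁) c₂ hc₂
  simp only [gromovProd, wordDist, mul_one, inv_inv, hX.wordLength_inv] at hprod
  linarith [le_abs_self D]

/-- **Lemma 2.2(5).** For virtually cyclic subgroups with finite intersection, every
`c₁ ∈ C₁` becomes shortest in its `C₂`-coset after multiplying by a bounded element of
`C₂`. -/
theorem shortest_coset_rep_bounded_correction {G : Type u} [Group G]
    (hG : IsWordHyperbolic G) (X : Set G) (hX : IsSymmGen X)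
    (C₁ C₂ : Subgroup G)
    (hvc₁ : IsVirtuallyCyclic ↥C₁) (hvc₂ : IsVirtuallyCyclic ↥C₂)
    (hfin : ((C₁ ⊓ C₂ : Subgroup G) : Set G).Finite) :
    ∃ K₂ : ℝ, 0 < K₂ ∧
      ∀ c₁ ∈ C₁, ∃ c₂ ∈ C₂,
        (wordLength X c₂ : ℝ) ≤ K₂ ∧
        ShortestIn X (c₁ * c₂) {x | ∃ c ∈ C₂, x = c₁ * c} :=
  shortest_coset_rep_bounded_correction_general hG X hX C₁ C₂
    (hG.isQuasiconvex_of_isVirtuallyCyclic hvc₁) (hG.isQuasiconvex_of_isVirtuallyCyclic hvc₂) hfin
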